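/- arXiv:2208.04931 — 2 statements merged into one kernel-verified Lean document; each statement's English description precedes it below -/
import Mathlib

section
/- Let L be a nonempty regular language over a finite linearly ordered alphabet Σ, let D₀ be a minimal DFA for L (every state reachable from the initial state, every state able to reach a final state, and any two Myhill–Nerode equivalent words of Pref(L) reach the same state), and let p ≥ 1. Then there exists a DFA D with L(D) = L (finite state set, single initial state, every state reachable and useful) admitting a co-lex order with a chain partition into at most p chains, if and only if every set of states of D₀ that is entangled in D₀ has cardinality at most p. In other words, width^D(L) = ent(D₀) = ent(L). -/
/-!
# Width of a regular language and entanglement of its minimal automaton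

*Width bounds entanglement.* In a co-lex ordered DFA `D`, `u < v` forces every word reaching `u` to
be strictly smaller than every word reaching `v` (`IsColexDFA.colexLt_of_le`). So a monotone sequence
cannot visit two distinct comparable states infinitely often. If `Q'` is entangled in `D0`, each
`q ∈ Q'` has a state of `D` that is visited infinitely often at times when `D0` is in `q`; these
states are pairwise incomparable, hence lie in distinct chains (`ncard_le_of_colex`).

*Entanglement bounds width.* On any reachable DFA the relation `leD` is a co-lex order
(`DFA'.isColex_leD`), so it is enough to find a DFA for `L` that `leD` splits into `p` chains. The
DFA used is `D0` together with a memory of the last `k` letters read, for a suitable `k`.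

To choose `k`, fix a left-infinite word `x`, encoded as `x : ℕ → A` with `x 0` the last letter. The
words ending with the last `n` letters of `x` and lying below `x` reach a set of states of `D0` that
decreases with `n`, hence stabilises. In the limit set every state is reached by words arbitrarily
close to `x` from below, so an increasing sequence visits each of its states infinitely often: the
limit set is entangled and has at most `p` elements (`exists_ncard_le`). The same holds above `x`.
By compactness of `ℕ → A`, a single `k` works: every word `w` of length `k` ends with a window
of some `x` on which both sets have at most `p` elements (`exists_window_length`).

Two states with different memories are comparable. For a fixed memory `w` of length `k`, colour the
states of `D0` with `p` colours, injectively on the states reached below `x` and injectively on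
those reached above `x`. If two distinct states with memory `w` have the same colour, then they are
not both reached below `x` and not both reached above `x`; so one is reached only below `x`, the
other only above, and they are comparable. The colour classes are therefore chains.
-/

/-- Strict co-lexicographic order on words: compare reversed words lexicographically. -/
def colexLt {A : Type} [LinearOrder A] (α β : List A) : Prop :=
  List.Lex (· < ·) α.reverse β.reverse

/-- Co-lexicographic order (reflexive version). -/
def colexLe {A : Type} [LinearOrder A] (α β : List A) : Prop :=
  colexLt α β ∨ α = β

/-- The prefix closure of a language. -/
def Pref {A : Type} (L : Set (List A)) : Set (List A) :=
  {α | ∃ γ : List A, α ++ γ ∈ L}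

/-- The Myhill–Nerode equivalence of a language. -/
def NerodeEq {A : Type} (L : Set (List A)) (α β : List A) : Prop :=
  ∀ γ : List A, α ++ γ ∈ L ↔ β ++ γ ∈ L

/-- A monotone (nondecreasing or nonincreasing) sequence of words w.r.t. co-lex order. -/
def MonotoneSeq {A : Type} [LinearOrder A] (α : ℕ → List A) : Prop :=
  (∀ i, colexLe (α i) (α (i + 1))) ∨ (∀ i, colexLe (α (i + 1)) (α i))

/-- A partition of the state set into `p` chains with respect to the relation `le`. -/
def IsChainPartition {Q : Type} (le : Q → Q → Prop) (p : ℕ) (f : Fin p → Set Q) : Prop :=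
  (∀ q : Q, ∃! i : Fin p, q ∈ f i) ∧
  ∀ i : Fin p, ∀ u ∈ f i, ∀ v ∈ f i, le u v ∨ le v u

/-- A deterministic finite automaton (with possibly undefined transitions). -/
structure DFA' (A Q : Type) where
  start : Q
  delta : Q → A → Option Q
  accept : Set Q

namespace DFA'

variable {A Q : Type}

/-- Extended (partial) transition function on words. -/
def deltaStar (D : DFA' A Q) : Q → List A → Option Q
  | q, [] => some q
  | q, a :: w => (D.delta q a).bind fun r => D.deltaStar r w

/-- `D.Iq q` is the set of words reaching `q` from the initial state. -/
def Iq (D : DFA' A Q) (q : Q) : Set (List A) :=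
  {α | D.deltaStar D.start α = some q}

/-- The accepted language. -/
def lang (D : DFA' A Q) : Set (List A) :=
  {α | ∃ q ∈ D.accept, D.deltaStar D.start α = some q}

/-- Labels of transitions entering a state, with the extra bottom symbol `#`
added exactly for the initial state. -/
def lam (D : DFA' A Q) (q : Q) : Set (WithBot A) :=
  {x | ∃ (a : A) (u : Q), x = (a : WithBot A) ∧ D.delta u a = some q} ∪
    {x | q = D.start ∧ x = (⊥ : WithBot A)}

/-- Every state is reachable from the initial state. -/
def Reachable (D : DFA' A Q) : Prop :=
  ∀ q : Q, ∃ α : List A, D.deltaStar D.start α = some q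

/-- Every state can reach a final state. -/
def Useful (D : DFA' A Q) : Prop :=
  ∀ q : Q, ∃ (β : List A) (f : Q), f ∈ D.accept ∧ D.deltaStar q β = some f

/-- The relation `≤_D`: `u ≤_D v` iff `u = v` or every word reaching `u` is
co-lexicographically strictly smaller than every word reaching `v`. -/
def leD [LinearOrder A] (D : DFA' A Q) (u v : Q) : Prop :=
  u = v ∨ ∀ α ∈ D.Iq u, ∀ β ∈ D.Iq v, colexLt α β

/-- The strict relation `<_D`. -/
def ltD [LinearOrder A] (D : DFA' A Q) (u v : Q) : Prop :=
  u ≠ v ∧ ∀ α ∈ D.Iq u, ∀ β ∈ D.Iq v, colexLt α β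

/-- A set of states of a DFA is entangled if some monotone sequence of words of
`Pref (L(D))` visits every state of the set infinitely often. -/
def Entangled [LinearOrder A] (D : DFA' A Q) (Q' : Set Q) : Prop :=
  ∃ α : ℕ → List A, (∀ i, α i ∈ Pref D.lang) ∧ MonotoneSeq α ∧
    ∀ q ∈ Q', {i : ℕ | D.deltaStar D.start (α i) = some q}.Infinite

end DFA'

/-- A co-lex order on a DFA: a partial order on the states satisfying Axioms 1 and 2. -/
structure IsColexDFA {A Q : Type} [LinearOrder A] (D : DFA' A Q) (le : Q → Q → Prop) : Prop where
  refl : ∀ u, le u u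
  antisymm : ∀ u v, le u v → le v u → u = v
  trans : ∀ u v w, le u v → le v w → le u w
  ax1 : ∀ u v, le u v → u ≠ v → ∀ a ∈ D.lam u, ∀ b ∈ D.lam v, a ≤ b
  ax2 : ∀ (a : A) (u v u' v' : Q),
      D.delta u' a = some u → D.delta v' a = some v → le u v → u ≠ v → le u' v'

/-! ### Finite words against infinite words

All words in this part are reversed, so that the co-lexicographic order becomes lexicographic. -/

section Words

variable {A : Type}

/-- The first `n` letters of the infinite word `x`. -/
def prefixOf : (ℕ → A) → ℕ → List A
  | _, 0 => []
  | x, n + 1 => x 0 :: prefixOf (fun i => x (i + 1)) n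

theorem prefixOf_prefix_of_le (x : ℕ → A) {n m : ℕ} (h : n ≤ m) :
    prefixOf x n <+: prefixOf x m := by
  induction n generalizing x m with
  | zero => simp [prefixOf]
  | succ n ih =>
    obtain ⟨m, rfl⟩ : ∃ m', m = m' + 1 := ⟨m - 1, by omega⟩
    simp only [prefixOf, List.cons_prefix_cons, true_and]
    exact ih _ (by omega)

theorem prefixOf_prefix_of_getD (d : A) (w : List A) (n : ℕ) (x : ℕ → A) (hn : n ≤ w.length)
    (h : ∀ i < n, w.getD i d = x i) : prefixOf x n <+: w := by
  induction n generalizing w x with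
  | zero => simp [prefixOf]
  | succ n ih =>
    cases w with
    | nil => simp at hn
    | cons a w =>
      simp only [prefixOf, List.cons_prefix_cons]
      refine ⟨by simpa using (h 0 (by omega)).symm, ih w _ (by simpa using hn) fun i hi => ?_⟩
      simpa using h (i + 1) (by omega)

variable [LinearOrder A]

/-- `LtInf r x`: the finite word `r` is lexicographically smaller than the infinite word `x`
(in particular every finite prefix of `x` is). A finite word not satisfying this is larger
than `x`. -/
def LtInf : List A → (ℕ → A) → Prop
  | [], _ => True
  | a :: r, x => a < x 0 ∨ (a = x 0 ∧ LtInf r fun i => x (i + 1))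

theorem lex_of_ltInf_of_not_ltInf (r s : List A) (x : ℕ → A) (hr : LtInf r x) (hs : ¬ LtInf s x) :
    List.Lex (· < ·) r s := by
  induction r generalizing s x with
  | nil =>
    cases s with
    | nil => exact absurd trivial hs
    | cons b s => exact List.Lex.nil
  | cons a r ih =>
    cases s with
    | nil => exact absurd trivial hs
    | cons b s =>
      simp only [LtInf, not_or, not_and, not_lt] at hr hs
      rcases hr with hr | ⟨rfl, hr⟩
      · exact List.Lex.rel (lt_of_lt_of_le hr hs.1)
      · rcases hs.1.lt_or_eq with h | h
        · exact List.Lex.rel h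
        · rw [← h]
          exact List.Lex.cons (ih s _ hr (hs.2 h.symm))

/-- A word below `x` is also below every word sharing a long enough prefix with `x`. -/
theorem lex_of_ltInf_of_prefix (r s : List A) (x : ℕ → A) (hr : LtInf r x)
    (hs : prefixOf x (r.length + 1) <+: s) : List.Lex (· < ·) r s := by
  induction r generalizing s x with
  | nil =>
    cases s with
    | nil => simp [prefixOf] at hs
    | cons b s => exact List.Lex.nil
  | cons a r ih =>
    cases s with
    | nil => simp [prefixOf] at hs
    | cons b s =>
      rw [List.length_cons, prefixOf, List.cons_prefix_cons] at hs
      obtain ⟨rfl, hs⟩ := hs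
      rcases hr with hr | ⟨rfl, hr⟩
      · exact List.Lex.rel hr
      · exact List.Lex.cons (ih s _ hr hs)

/-- A word above `x` is also above every word sharing a long enough prefix with `x`. -/
theorem lex_of_not_ltInf_of_prefix (r s : List A) (x : ℕ → A) (hr : ¬ LtInf r x)
    (hs : prefixOf x (r.length + 1) <+: s) : List.Lex (· < ·) s r := by
  induction r generalizing s x with
  | nil => exact absurd trivial hr
  | cons a r ih =>
    cases s with
    | nil => simp [prefixOf] at hs
    | cons b s =>
      rw [List.length_cons, prefixOf, List.cons_prefix_cons] at hs
      obtain ⟨rfl, hs⟩ := hs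
      simp only [LtInf, not_or, not_and, not_lt] at hr
      rcases hr.1.lt_or_eq with h | h
      · exact List.Lex.rel h
      · rw [← h]
        exact List.Lex.cons (ih s _ (hr.2 h.symm) hs)

theorem lex_of_lex_take (k : ℕ) (r s : List A)
    (h : List.Lex (· < ·) (r.take k) (s.take k)) : List.Lex (· < ·) r s := by
  induction k generalizing r s with
  | zero => simp at h
  | succ k ih =>
    cases s with
    | nil => simp at h
    | cons b s =>
      cases r with
      | nil => exact List.Lex.nil
      | cons a r =>
        simp only [List.take_succ_cons] at h
        cases h with
        | cons h => exact List.Lex.cons (ih r s h)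
        | rel h => exact List.Lex.rel h

theorem lex_trichotomy (r s : List A) :
    List.Lex (· < ·) r s ∨ r = s ∨ List.Lex (· < ·) s r := by
  induction r generalizing s with
  | nil =>
    cases s with
    | nil => exact Or.inr (Or.inl rfl)
    | cons b s => exact Or.inl List.Lex.nil
  | cons a r ih =>
    cases s with
    | nil => exact Or.inr (Or.inr List.Lex.nil)
    | cons b s =>
      rcases lt_trichotomy a b with h | rfl | h
      · exact Or.inl (List.Lex.rel h)
      · rcases ih s with h | rfl | h
        · exact Or.inl (List.Lex.cons h)
        · exact Or.inr (Or.inl rfl)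
        · exact Or.inr (Or.inr (List.Lex.cons h))
      · exact Or.inr (Or.inr (List.Lex.rel h))

theorem colexLt_irrefl (α : List A) : ¬ colexLt α α := by
  unfold colexLt
  induction α.reverse with
  | nil => intro h; cases h
  | cons a r ih =>
    intro h
    cases h with
    | cons h => exact ih h
    | rel h => exact lt_irrefl _ h

theorem colexLt_trans {α β γ : List A} (h₁ : colexLt α β) (h₂ : colexLt β γ) : colexLt α γ := by
  unfold colexLt at *
  generalize α.reverse = r at *
  generalize β.reverse = s at *
  generalize γ.reverse = t at *
  induction h₁ generalizing t with
  | nil => cases h₂ <;> exact List.Lex.nil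
  | cons h ih =>
    cases h₂ with
    | cons h' => exact List.Lex.cons (ih _ h')
    | rel h' => exact List.Lex.rel h'
  | rel h =>
    cases h₂ with
    | cons h' => exact List.Lex.rel h
    | rel h' => exact List.Lex.rel (lt_trans h h')

theorem colexLe_trans {α β γ : List A} (h₁ : colexLe α β) (h₂ : colexLe β γ) : colexLe α γ := by
  rcases h₁ with h₁ | rfl
  · rcases h₂ with h₂ | rfl
    · exact Or.inl (colexLt_trans h₁ h₂)
    · exact Or.inl h₁
  · exact h₂

theorem not_colexLt_of_colexLe {α β : List A} (h : colexLe α β) : ¬ colexLt β α := by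
  intro h'
  rcases h with h | rfl
  · exact colexLt_irrefl _ (colexLt_trans h h')
  · exact colexLt_irrefl _ h'

theorem colexLt_append_singleton (α β : List A) (a b : A) :
    colexLt (α ++ [a]) (β ++ [b]) ↔ a < b ∨ (a = b ∧ colexLt α β) := by
  simp only [colexLt, List.reverse_append, List.reverse_singleton, List.singleton_append]
  constructor
  · intro h
    cases h with
    | cons h => exact Or.inr ⟨rfl, h⟩
    | rel h => exact Or.inl h
  · rintro (h | ⟨rfl, h⟩)
    · exact List.Lex.rel h
    · exact List.Lex.cons h

/-- A monotone sequence cannot visit infinitely often two sets of words one of which lies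
entirely below the other. -/
theorem MonotoneSeq.not_separated {α : ℕ → List A} (hα : MonotoneSeq α) {U V : Set (List A)}
    (hU : {i | α i ∈ U}.Infinite) (hV : {i | α i ∈ V}.Infinite)
    (h : ∀ x ∈ U, ∀ y ∈ V, colexLt x y) : False := by
  rcases hα with hα | hα
  · obtain ⟨i, hi⟩ := hV.nonempty
    obtain ⟨j, hj, hij⟩ := hU.exists_gt i
    refine not_colexLt_of_colexLe ?_ (h _ hj _ hi)
    exact Nat.le_induction (P := fun j _ => colexLe (α i) (α j)) (Or.inr rfl)
      (fun j _ ih => colexLe_trans ih (hα j)) j hij.le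
  · obtain ⟨i, hi⟩ := hU.nonempty
    obtain ⟨j, hj, hij⟩ := hV.exists_gt i
    refine not_colexLt_of_colexLe ?_ (h _ hi _ hj)
    exact Nat.le_induction (P := fun j _ => colexLe (α j) (α i)) (Or.inr rfl)
      (fun j _ ih => colexLe_trans (hα j) ih) j hij.le

end Words

/-! ### Runs of automata and co-lex orders -/

namespace DFA'

variable {A Q : Type} (D : DFA' A Q)

theorem deltaStar_append (q : Q) (α β : List A) :
    D.deltaStar q (α ++ β) = (D.deltaStar q α).bind fun r => D.deltaStar r β := by
  induction α generalizing q with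
  | nil => simp [deltaStar]
  | cons a α ih => cases h : D.delta q a <;> simp [deltaStar, h, ih]

theorem deltaStar_append_singleton (q : Q) (α : List A) (a : A) :
    D.deltaStar q (α ++ [a]) = (D.deltaStar q α).bind fun r => D.delta r a := by
  rw [deltaStar_append]
  congr 1
  funext r
  cases h : D.delta r a <;> simp [deltaStar, h]

theorem mem_pref_of_deltaStar (hu : D.Useful) {α : List A} {q : Q}
    (h : D.deltaStar D.start α = some q) : α ∈ Pref D.lang := by
  obtain ⟨β, f, hf, hβ⟩ := hu q
  exact ⟨β, f, hf, by simp [deltaStar_append, h, hβ]⟩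

theorem exists_deltaStar_of_mem_pref {α : List A} (h : α ∈ Pref D.lang) :
    ∃ q, D.deltaStar D.start α = some q := by
  obtain ⟨γ, f, -, hγ⟩ := h
  rw [deltaStar_append, Option.bind_eq_some_iff] at hγ
  exact ⟨hγ.choose, hγ.choose_spec.1⟩

theorem nerodeEq_of_deltaStar_eq {α β : List A}
    (h : D.deltaStar D.start α = D.deltaStar D.start β) : NerodeEq D.lang α β := by
  intro γ
  simp only [lang, Set.mem_ofPred_eq, deltaStar_append, h]

/-- On a DFA all of whose states are reachable, comparing the sets of words reaching two states is
a co-lex order. -/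
theorem isColex_leD [LinearOrder A] (hr : D.Reachable) : IsColexDFA D D.leD where
  refl u := Or.inl rfl
  antisymm u v huv hvu := by
    rcases huv with rfl | huv
    · rfl
    rcases hvu with rfl | hvu
    · rfl
    obtain ⟨α, hα⟩ := hr u
    obtain ⟨β, hβ⟩ := hr v
    exact absurd (colexLt_trans (huv α hα β hβ) (hvu β hβ α hα)) (colexLt_irrefl _)
  trans u v w huv hvw := by
    rcases huv with rfl | huv
    · exact hvw
    rcases hvw with rfl | hvw
    · exact Or.inr huv
    obtain ⟨β, hβ⟩ := hr v
    exact Or.inr fun α hα γ hγ => colexLt_trans (huv α hα β hβ) (hvw β hβ γ hγ)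
  ax1 u v huv hne a ha b hb := by
    replace huv := huv.resolve_left hne
    rcases ha with ⟨a, u', rfl, hu'⟩ | ⟨-, rfl⟩
    · obtain ⟨α, hα⟩ := hr u'
      have hαa : α ++ [a] ∈ D.Iq u := by
        simp [Iq, deltaStar_append_singleton, hα, hu']
      rcases hb with ⟨b, v', rfl, hv'⟩ | ⟨rfl, rfl⟩
      · obtain ⟨β, hβ⟩ := hr v'
        have hβb : β ++ [b] ∈ D.Iq v := by
          simp [Iq, deltaStar_append_singleton, hβ, hv']
        rcases (colexLt_append_singleton _ _ _ _).1 (huv _ hαa _ hβb) with h | ⟨rfl, -⟩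
        · exact WithBot.coe_le_coe.2 h.le
        · exact le_rfl
      · -- The empty word reaches the initial state, and no word is smaller.
        have h := huv _ hαa [] (by simp [Iq, deltaStar])
        simp [colexLt] at h
    · exact bot_le
  ax2 a u v u' v' hu hv huv hne := by
    replace huv := huv.resolve_left hne
    refine Or.inr fun α hα β hβ => ?_
    have hα' : D.deltaStar D.start α = some u' := hα
    have hβ' : D.deltaStar D.start β = some v' := hβ
    have h := huv (α ++ [a]) (by simp [Iq, deltaStar_append_singleton, hα', hu])
      (β ++ [a]) (by simp [Iq, deltaStar_append_singleton, hβ', hv])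
    simpa [colexLt_append_singleton] using h

end DFA'

/-- In a co-lex ordered DFA, `u < v` forces every word reaching `u` to be strictly smaller than
every word reaching `v`. -/
theorem IsColexDFA.colexLt_of_le {A Q : Type} [LinearOrder A] {D : DFA' A Q} {le : Q → Q → Prop}
    (h : IsColexDFA D le) {u v : Q} (huv : le u v) (hne : u ≠ v) {α β : List A}
    (hα : D.deltaStar D.start α = some u) (hβ : D.deltaStar D.start β = some v) :
    colexLt α β := by
  induction α using List.reverseRecOn generalizing u v β with
  | nil =>
    rcases List.eq_nil_or_concat β with rfl | ⟨β, b, rfl⟩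
    · rw [hα] at hβ
      exact absurd (Option.some.inj hβ) hne
    · simp [colexLt]
  | append_singleton α a ih =>
    rw [DFA'.deltaStar_append_singleton, Option.bind_eq_some_iff] at hα
    obtain ⟨u', hu', hu⟩ := hα
    rcases List.eq_nil_or_concat β with rfl | ⟨β, b, rfl⟩
    · have hv : v = D.start := by simpa [DFA'.deltaStar, eq_comm] using hβ
      have := h.ax1 u v huv hne a (Or.inl ⟨a, u', rfl, hu⟩) ⊥ (Or.inr ⟨hv, rfl⟩)
      simp at this
    · rw [List.concat_eq_append, DFA'.deltaStar_append_singleton, Option.bind_eq_some_iff] at hβ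
      obtain ⟨v', hv', hv⟩ := hβ
      have hab : a ≤ b := WithBot.coe_le_coe.1
        (h.ax1 u v huv hne a (Or.inl ⟨a, u', rfl, hu⟩) b (Or.inl ⟨b, v', rfl, hv⟩))
      rw [List.concat_eq_append, colexLt_append_singleton]
      rcases hab.lt_or_eq with hab | rfl
      · exact Or.inl hab
      · refine Or.inr ⟨rfl, ih (h.ax2 a u v u' v' hu hv huv hne) ?_ hu' hv'⟩
        rintro rfl
        exact hne (Option.some.inj (hu.symm.trans hv))

/-! ### Width bounds entanglement -/

theorem ncard_le_of_colex {A Q Q0 : Type} [LinearOrder A] [Fintype Q] [Fintype Q0]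
    {L : Set (List A)} (D0 : DFA' A Q0) (hL0 : D0.lang = L)
    (hmin : ∀ α ∈ Pref L, ∀ β ∈ Pref L, NerodeEq L α β →
        D0.deltaStar D0.start α = D0.deltaStar D0.start β)
    (D : DFA' A Q) (le : Q → Q → Prop) (p : ℕ) (f : Fin p → Set Q)
    (hL : D.lang = L) (hle : IsColexDFA D le) (hf : IsChainPartition le p f)
    (Q' : Set Q0) (hQ' : D0.Entangled Q') : Q'.ncard ≤ p := by
  obtain ⟨α, hpref, hmono, hinf⟩ := hQ'
  rw [hL0] at hpref
  have key : ∀ q : Q', ∃ u : Q,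
      {i | D0.deltaStar D0.start (α i) = some q.1 ∧
        D.deltaStar D.start (α i) = some u}.Infinite := by
    intro q
    by_contra! hcon
    refine hinf q q.2 ((Set.finite_iUnion hcon).subset ?_)
    intro i hi
    obtain ⟨u, hu⟩ := D.exists_deltaStar_of_mem_pref (hL ▸ hpref i)
    exact Set.mem_iUnion.2 ⟨u, hi, hu⟩
  choose u hu' using key
  have hvis : ∀ q, {i | α i ∈ D.Iq (u q)}.Infinite := fun q =>
    (hu' q).mono fun i hi => hi.2
  have huinj : Function.Injective u := by
    intro q q' h
    obtain ⟨i, hi, hi'⟩ := (hu' q).nonempty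
    obtain ⟨j, hj, hj'⟩ := (hu' q').nonempty
    have := hmin _ (hpref i) _ (hpref j)
      (hL ▸ D.nerodeEq_of_deltaStar_eq (by rw [hi', hj', h]))
    rw [hi, hj] at this
    exact Subtype.ext (Option.some.inj this)
  choose c hc hc' using fun q : Q => hf.1 q
  have hinj : Function.Injective fun q : Q' => c (u q) := by
    intro q q' h
    by_contra hne
    have hne' : u q ≠ u q' := fun h => hne (huinj h)
    have h' : c (u q) = c (u q') := h
    have hc2 := hc (u q')
    simp only [← h'] at hc2
    rcases hf.2 _ _ (hc (u q)) _ hc2 with hl | hl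
    · exact hmono.not_separated (hvis q) (hvis q')
        fun x hx y hy => hle.colexLt_of_le hl hne' hx hy
    · exact hmono.not_separated (hvis q') (hvis q)
        fun x hx y hy => hle.colexLt_of_le hl hne'.symm hx hy
  have := Nat.card_le_card_of_injective _ hinj
  rwa [Nat.card_coe_set_eq, Nat.card_eq_fintype_card, Fintype.card_fin] at this

/-! ### Windows around an infinite word -/

section Windows

variable {A Q0 : Type}

/-- Let `W n` be a decreasing family of sets of words such that every word of the family is
`R`-related to all words of `W` far enough. If every set of states visited infinitely often by an
`R`-sequence has at most `p` elements, then for some `n` the words of `W n` reach at most `p`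
states. -/
theorem exists_ncard_le [Fintype Q0] (D0 : DFA' A Q0) (p : ℕ)
    (R : List A → List A → Prop) (W : ℕ → Set (List A)) (hW : Antitone W)
    (hR : ∀ α ∈ W 0, ∀ β ∈ W (α.length + 1), R α β)
    (hent : ∀ (S : Set Q0) (α : ℕ → List A), (∀ i, ∃ q, α i ∈ D0.Iq q) →
      (∀ i, R (α i) (α (i + 1))) →
      (∀ q ∈ S, {i | D0.deltaStar D0.start (α i) = some q}.Infinite) → S.ncard ≤ p) :
    ∃ n, {q | ∃ α ∈ W n, α ∈ D0.Iq q}.ncard ≤ p := by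
  classical
  set T : Set Q0 := {q | ∀ n, ∃ α ∈ W n, α ∈ D0.Iq q} with hT
  have hTp : T.ncard ≤ p := by
    rcases T.eq_empty_or_nonempty with h | ⟨q₀, hq₀⟩
    · simp [h]
    have : Nonempty T := ⟨⟨q₀, hq₀⟩⟩
    obtain ⟨e, he⟩ := exists_surjective_nat T
    choose w hw hwq using fun (q : T) n => q.2 n
    -- `t i` lists the states of `T`, each of them infinitely often.
    let t : ℕ → T := fun i => e i.unpair.1
    let α : ℕ → List A := fun i =>
      Nat.rec (w (t 0) 0) (fun i β => w (t (i + 1)) (β.length + 1)) i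
    have hαs : ∀ i, α (i + 1) = w (t (i + 1)) ((α i).length + 1) := fun i => rfl
    have hαt : ∀ i, α i ∈ D0.Iq (t i) := by
      intro i
      cases i with
      | zero => exact hwq _ _
      | succ i => rw [hαs]; exact hwq _ _
    have hα0 : ∀ i, α i ∈ W 0 := by
      intro i
      cases i with
      | zero => exact hw _ _
      | succ i => rw [hαs]; exact hW (Nat.zero_le _) (hw _ _)
    refine hent T α (fun i => ⟨_, hαt i⟩) (fun i => hR _ (hα0 i) _ (by rw [hαs]; exact hw _ _)) ?_
    intro q hq
    obtain ⟨m, hm⟩ := he ⟨q, hq⟩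
    refine Set.infinite_of_injective_forall_mem (f := fun j => Nat.pair m j) ?_ ?_
    · intro i j h
      simpa using h
    · intro j
      have := hαt (Nat.pair m j)
      simpa [t, hm, DFA'.Iq] using this
  have hstab : ∀ q, ∃ n, (∃ α ∈ W n, α ∈ D0.Iq q) → q ∈ T := by
    intro q
    by_cases hq : q ∈ T
    · exact ⟨0, fun _ => hq⟩
    · obtain ⟨n, hn⟩ := not_forall.1 hq
      exact ⟨n, fun h => absurd h hn⟩
  choose m hm using hstab
  refine ⟨Finset.univ.sup m, (Set.ncard_le_ncard ?_ T.toFinite).trans hTp⟩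
  rintro q ⟨α, hα, hq⟩
  exact hm q ⟨α, hW (Finset.le_sup (Finset.mem_univ q)) hα, hq⟩

/-- Compactness of the space of infinite words over a finite alphabet: if every `x` has a prefix of
length `N x`, then all words of some fixed length start with one of these prefixes. -/
theorem exists_uniform_length [Finite A] (N : (ℕ → A) → ℕ) :
    ∃ k, ∀ w : List A, w.length = k → ∃ x, prefixOf x (N x) <+: w := by
  classical
  let : TopologicalSpace A := ⊥
  have : DiscreteTopology A := ⟨rfl⟩
  have hopen : ∀ x : ℕ → A, {y : ℕ → A | ∀ i < N x, y i = x i} ∈ nhds x := by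
    intro x
    refine IsOpen.mem_nhds ?_ (fun i _ => rfl)
    have : {y : ℕ → A | ∀ i < N x, y i = x i} = (Set.Iio (N x)).pi fun i => {x i} := by
      ext y
      simp [Set.mem_pi]
    rw [this]
    exact isOpen_set_pi (Set.finite_Iio _) fun i _ => isOpen_discrete _
  obtain ⟨t, -, ht⟩ := isCompact_univ.elim_nhds_subcover _ fun x _ => hopen x
  -- The length is positive so that a word of this length provides a letter.
  refine ⟨t.sup N + 1, fun w hw => ?_⟩
  cases w with
  | nil => simp at hw
  | cons d w =>
    obtain ⟨x, hxt, hx⟩ := Set.mem_iUnion₂.1 (ht (Set.mem_univ fun i => (d :: w).getD i d))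
    refine ⟨x, prefixOf_prefix_of_getD d _ _ _ ?_ hx⟩
    rw [hw]
    exact (Finset.le_sup hxt).trans (Nat.le_succ _)

variable [LinearOrder A]

/-- The states reached by the words that agree with `x` on the last `n` letters and are below `x`.
The word `x` is read from right to left. -/
def DFA'.below (D0 : DFA' A Q0) (x : ℕ → A) (n : ℕ) : Set Q0 :=
  {q | ∃ α ∈ {α : List A | prefixOf x n <+: α.reverse ∧ LtInf α.reverse x}, α ∈ D0.Iq q}

/-- The states reached by the words that agree with `x` on the last `n` letters and are above `x`.
The word `x` is read from right to left. -/
def DFA'.above (D0 : DFA' A Q0) (x : ℕ → A) (n : ℕ) : Set Q0 :=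
  {q | ∃ α ∈ {α : List A | prefixOf x n <+: α.reverse ∧ ¬ LtInf α.reverse x}, α ∈ D0.Iq q}

theorem exists_window [Fintype Q0] (D0 : DFA' A Q0) (hu : D0.Useful) (p : ℕ)
    (hp : ∀ Q' : Set Q0, D0.Entangled Q' → Q'.ncard ≤ p) (x : ℕ → A) :
    ∃ n, (D0.below x n).ncard ≤ p ∧ (D0.above x n).ncard ≤ p := by
  have hpref : ∀ α : ℕ → List A, (∀ i, ∃ q, α i ∈ D0.Iq q) → ∀ i, α i ∈ Pref D0.lang :=
    fun α h i => D0.mem_pref_of_deltaStar hu (h i).choose_spec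
  obtain ⟨n, hn⟩ := exists_ncard_le D0 p colexLe
    (fun n => {α : List A | prefixOf x n <+: α.reverse ∧ LtInf α.reverse x})
    (fun n m h α hα => ⟨(prefixOf_prefix_of_le x h).trans hα.1, hα.2⟩)
    (fun α hα β hβ => Or.inl (lex_of_ltInf_of_prefix _ _ x hα.2 (by simpa using hβ.1)))
    (fun S α h₁ h₂ h₃ => hp S ⟨α, hpref α h₁, Or.inl h₂, h₃⟩)
  obtain ⟨m, hm⟩ := exists_ncard_le D0 p (fun α β => colexLe β α)
    (fun n => {α : List A | prefixOf x n <+: α.reverse ∧ ¬ LtInf α.reverse x})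
    (fun n m h α hα => ⟨(prefixOf_prefix_of_le x h).trans hα.1, hα.2⟩)
    (fun α hα β hβ => Or.inl (lex_of_not_ltInf_of_prefix _ _ x hα.2 (by simpa using hβ.1)))
    (fun S α h₁ h₂ h₃ => hp S ⟨α, hpref α h₁, Or.inr h₂, h₃⟩)
  refine ⟨max n m, (Set.ncard_le_ncard ?_ (Set.toFinite _)).trans hn,
    (Set.ncard_le_ncard ?_ (Set.toFinite _)).trans hm⟩
  · rintro q ⟨α, hα, hq⟩
    exact ⟨α, ⟨(prefixOf_prefix_of_le x (le_max_left _ _)).trans hα.1, hα.2⟩, hq⟩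
  · rintro q ⟨α, hα, hq⟩
    exact ⟨α, ⟨(prefixOf_prefix_of_le x (le_max_right _ _)).trans hα.1, hα.2⟩, hq⟩

theorem exists_window_length [Finite A] [Fintype Q0] (D0 : DFA' A Q0) (hu : D0.Useful) (p : ℕ)
    (hp : ∀ Q' : Set Q0, D0.Entangled Q' → Q'.ncard ≤ p) :
    ∃ k, ∀ w : List A, w.length = k →
      ∃ x n, prefixOf x n <+: w ∧ (D0.below x n).ncard ≤ p ∧ (D0.above x n).ncard ≤ p := by
  choose N hN using exists_window D0 hu p hp
  obtain ⟨k, hk⟩ := exists_uniform_length N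
  refine ⟨k, fun w hw => ?_⟩
  obtain ⟨x, hx⟩ := hk w hw
  exact ⟨x, N x, hx, hN x⟩

end Windows

/-- Two sets with at most `p` elements can be coloured simultaneously with `p` colours, each of
them injectively. -/
theorem exists_colouring {X : Type} [Finite X] (p : ℕ) (hp : 1 ≤ p) (S T : Set X)
    (hS : S.ncard ≤ p) (hT : T.ncard ≤ p) :
    ∃ g : X → Fin p, Set.InjOn g S ∧ Set.InjOn g T := by
  classical
  have : NeZero p := ⟨by omega⟩
  have hS' : Nat.card S ≤ Nat.card (Fin p) := by simpa [Nat.card_coe_set_eq] using hS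
  obtain ⟨e⟩ : Nonempty (S ↪ Fin p) := by
    have := Fintype.ofFinite S
    exact Function.Embedding.nonempty_of_card_le (by simpa [Nat.card_eq_fintype_card] using hS')
  let g₀ : X → Fin p := fun x => if h : x ∈ S then e ⟨x, h⟩ else 0
  have hg₀ : Set.InjOn g₀ S := by
    intro x hx y hy h
    simpa [g₀, hx, hy] using h
  -- The colours left for `T \ S` are those not used on `S ∩ T`.
  have hcard : (T \ S).ncard ≤ ((g₀ '' (T ∩ S))ᶜ).ncard := by
    have h₁ := Set.ncard_inter_add_ncard_sdiff_eq_ncard T S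
    have h₂ := Set.ncard_add_ncard_compl (g₀ '' (T ∩ S))
    rw [(hg₀.mono Set.inter_subset_right).ncard_image] at h₂
    simp only [Nat.card_eq_fintype_card, Fintype.card_fin] at h₂
    omega
  obtain ⟨e'⟩ : Nonempty ((T \ S : Set X) ↪ ((g₀ '' (T ∩ S))ᶜ : Set (Fin p))) := by
    have := Fintype.ofFinite (T \ S : Set X)
    have := Fintype.ofFinite ((g₀ '' (T ∩ S))ᶜ : Set (Fin p))
    refine Function.Embedding.nonempty_of_card_le ?_
    rwa [← Nat.card_eq_fintype_card, ← Nat.card_eq_fintype_card, Nat.card_coe_set_eq,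
      Nat.card_coe_set_eq]
  let g : X → Fin p := fun x => if h : x ∈ T \ S then (e' ⟨x, h⟩).1 else g₀ x
  have hgS : ∀ x ∈ S, g x = g₀ x := fun x hx => by simp [g, hx]
  have hgT : ∀ x (h : x ∈ T \ S), g x = (e' ⟨x, h⟩).1 := fun x h => dif_pos h
  refine ⟨g, fun x hx y hy h => hg₀ hx hy (by rwa [hgS x hx, hgS y hy] at h), ?_⟩
  intro x hx y hy h
  by_cases hxS : x ∈ S <;> by_cases hyS : y ∈ S
  · exact hg₀ hxS hyS (by rwa [hgS x hxS, hgS y hyS] at h)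
  · rw [hgS x hxS, hgT y ⟨hy, hyS⟩] at h
    exact absurd ⟨x, ⟨hx, hxS⟩, h⟩ (e' ⟨y, hy, hyS⟩).2
  · rw [hgS y hyS, hgT x ⟨hx, hxS⟩] at h
    exact absurd ⟨y, ⟨hy, hyS⟩, h.symm⟩ (e' ⟨x, hx, hxS⟩).2
  · rw [hgT x ⟨hx, hxS⟩, hgT y ⟨hy, hyS⟩] at h
    exact congrArg Subtype.val (e'.injective (Subtype.ext h))

/-! ### The automaton remembering the last letters read -/

namespace DFA'

variable {A Q0 : Type} (D0 : DFA' A Q0) (k : ℕ)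

/-- The states of the automaton `D0.memory k`: pairs formed by a state of `D0` and the last `k`
letters read (the whole word if it is shorter), latest letter first, restricted to the pairs that
some word produces. -/
def MemState : Type :=
  {s : Q0 × List A // ∃ α, D0.deltaStar D0.start α = some s.1 ∧ α.reverse.take k = s.2}

instance [Finite A] [Finite Q0] : Finite (D0.MemState k) := by
  have hfin : {s : Q0 × List A | ∃ α, D0.deltaStar D0.start α = some s.1 ∧
      α.reverse.take k = s.2}.Finite := by
    refine (Set.finite_univ.prod (List.finite_length_le A k)).subset ?_
    rintro ⟨q, w⟩ ⟨α, -, h⟩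
    refine ⟨trivial, ?_⟩
    simp only at h
    simp [← h]
  exact hfin

theorem take_cons_take (a : A) (r : List A) :
    (a :: r.take k).take k = (a :: r).take k := by
  cases k with
  | zero => simp
  | succ k => simp [List.take_take]

/-- The state following `s` on the letter `a`, when `D0` moves to `r`. -/
def memStep (s : D0.MemState k) (a : A) (r : Q0) (hr : D0.delta s.1.1 a = some r) :
    D0.MemState k :=
  ⟨(r, (a :: s.1.2).take k), by
    obtain ⟨⟨q, w⟩, α, hα, hw⟩ := s
    refine ⟨α ++ [a], ?_, ?_⟩
    · simpa [deltaStar_append_singleton, hα] using hr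
    · simp only at hw
      simp [← hw, take_cons_take]⟩

/-- The automaton `D0` enriched with a memory of the last `k` letters read. -/
def memory : DFA' A (D0.MemState k) where
  start := ⟨(D0.start, []), [], rfl, by simp⟩
  delta s a := (D0.delta s.1.1 a).pmap (D0.memStep k s a) fun _ hr => hr
  accept := {s | s.1.1 ∈ D0.accept}

theorem memory_delta_eq_some (s t : D0.MemState k) (a : A) :
    (D0.memory k).delta s a = some t ↔
      D0.delta s.1.1 a = some t.1.1 ∧ (a :: s.1.2).take k = t.1.2 := by
  refine (Option.pmap_eq_some_iff (f := D0.memStep k s a)).trans ?_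
  constructor
  · rintro ⟨r, hr, hr', rfl⟩
    exact ⟨hr', rfl⟩
  · rintro ⟨h₁, h₂⟩
    exact ⟨_, h₁, h₁, Subtype.ext (Prod.ext rfl h₂.symm)⟩

theorem memory_deltaStar_eq_some (t : D0.MemState k) (α : List A) :
    (D0.memory k).deltaStar (D0.memory k).start α = some t ↔
      D0.deltaStar D0.start α = some t.1.1 ∧ α.reverse.take k = t.1.2 := by
  induction α using List.reverseRecOn generalizing t with
  | nil =>
    simp only [deltaStar, Option.some.injEq, List.reverse_nil, List.take_nil]
    constructor
    · rintro rfl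
      exact ⟨rfl, rfl⟩
    · rintro ⟨h₁, h₂⟩
      exact Subtype.ext (Prod.ext h₁ h₂)
  | append_singleton α a ih =>
    simp only [deltaStar_append_singleton, Option.bind_eq_some_iff, ih, memory_delta_eq_some,
      List.reverse_append, List.reverse_singleton, List.singleton_append]
    constructor
    · rintro ⟨s, ⟨h₁, h₂⟩, h₃, h₄⟩
      exact ⟨⟨_, h₁, h₃⟩, by rw [← h₄, ← h₂, take_cons_take]⟩
    · rintro ⟨⟨q, hq, hq'⟩, h⟩
      exact ⟨⟨(q, α.reverse.take k), α, hq, rfl⟩, ⟨hq, rfl⟩, hq', by rw [take_cons_take, h]⟩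

theorem memory_reachable : (D0.memory k).Reachable := by
  intro s
  obtain ⟨α, hα⟩ := s.2
  exact ⟨α, (D0.memory_deltaStar_eq_some k s α).2 hα⟩

theorem memory_lang : (D0.memory k).lang = D0.lang := by
  ext α
  constructor
  · rintro ⟨s, hs, hα⟩
    exact ⟨s.1.1, hs, ((D0.memory_deltaStar_eq_some k s α).1 hα).1⟩
  · rintro ⟨q, hq, hα⟩
    exact ⟨⟨(q, _), α, hα, rfl⟩, hq, (D0.memory_deltaStar_eq_some k _ α).2 ⟨hα, rfl⟩⟩

theorem memory_useful (hu : D0.Useful) : (D0.memory k).Useful := by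
  intro s
  obtain ⟨α, hα⟩ := s.2
  obtain ⟨β, f, hf, hβ⟩ := hu s.1.1
  have hαβ : D0.deltaStar D0.start (α ++ β) = some f := by
    simp [deltaStar_append, hα.1, hβ]
  refine ⟨β, ⟨(f, _), α ++ β, hαβ, rfl⟩, hf, ?_⟩
  have h := (D0.memory_deltaStar_eq_some k ⟨(f, _), α ++ β, hαβ, rfl⟩ (α ++ β)).2 ⟨hαβ, rfl⟩
  rwa [deltaStar_append, (D0.memory_deltaStar_eq_some k s α).2 hα, Option.bind_some] at h

/-- A memory shorter than `k` is the whole word read, so it determines the state. -/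
theorem memory_eq_of_length_lt (s t : D0.MemState k) (h : s.1.2 = t.1.2)
    (hk : s.1.2.length < k) : s = t := by
  obtain ⟨⟨q, w⟩, α, hα, hw⟩ := s
  obtain ⟨⟨q', w'⟩, β, hβ, hw'⟩ := t
  simp only at hα hβ hw hw' h hk
  subst h
  have hfull : ∀ γ : List A, γ.reverse.take k = w → γ.reverse = w := by
    intro γ hγ
    rw [← hγ, List.take_of_length_le]
    by_contra! hlt
    have := congrArg List.length hγ
    rw [List.length_take] at this
    omega
  obtain rfl : α = β := List.reverse_injective ((hfull α hw).trans (hfull β hw').symm)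
  rw [hα] at hβ
  obtain rfl := Option.some.inj hβ
  rfl

variable [LinearOrder A]

/-- States with different memories are comparable. -/
theorem memory_comparable_of_ne (s t : D0.MemState k) (h : s.1.2 ≠ t.1.2) :
    (D0.memory k).leD s t ∨ (D0.memory k).leD t s := by
  have key : ∀ s t : D0.MemState k, List.Lex (· < ·) s.1.2 t.1.2 → (D0.memory k).leD s t := by
    intro s t h
    refine Or.inr fun α hα β hβ => lex_of_lex_take k _ _ ?_
    rwa [((D0.memory_deltaStar_eq_some k s α).1 hα).2, ((D0.memory_deltaStar_eq_some k t β).1 hβ).2]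
  rcases lex_trichotomy s.1.2 t.1.2 with h' | h' | h'
  · exact Or.inl (key s t h')
  · exact absurd h' h
  · exact Or.inr (key t s h')

/-- If a memory lies in a window of `x`, two distinct states with this memory and the same colour
are on different sides of `x`, hence comparable. -/
theorem memory_comparable_of_window {C : Type} (s t : D0.MemState k) (h : s.1.2 = t.1.2)
    (x : ℕ → A) (n : ℕ) (hx : prefixOf x n <+: s.1.2) (g : Q0 → C)
    (hb : Set.InjOn g (D0.below x n)) (ha : Set.InjOn g (D0.above x n))
    (hg : g s.1.1 = g t.1.1) :
    (D0.memory k).leD s t ∨ (D0.memory k).leD t s := by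
  have mem : ∀ u : D0.MemState k, u.1.2 = s.1.2 → ∀ α ∈ (D0.memory k).Iq u,
      (LtInf α.reverse x → u.1.1 ∈ D0.below x n) ∧
        (¬ LtInf α.reverse x → u.1.1 ∈ D0.above x n) := by
    intro u hu α hα
    obtain ⟨h₁, h₂⟩ := (D0.memory_deltaStar_eq_some k u α).1 hα
    rw [← hu, ← h₂] at hx
    have hp : prefixOf x n <+: α.reverse := hx.trans (List.take_prefix _ _)
    exact ⟨fun hl => ⟨α, ⟨hp, hl⟩, h₁⟩, fun hl => ⟨α, ⟨hp, hl⟩, h₁⟩⟩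
  by_cases hq : s.1.1 = t.1.1
  · exact Or.inl (Or.inl (Subtype.ext (Prod.ext hq h)))
  -- A state with no word below `x` lies above `x`, and the other state then lies below `x`.
  have key : ∀ u v : D0.MemState k, u.1.2 = s.1.2 → v.1.2 = s.1.2 → g u.1.1 = g v.1.1 →
      u.1.1 ≠ v.1.1 → u.1.1 ∉ D0.below x n → (D0.memory k).leD v u := by
    intro u v hu hv hguv hne hub
    refine Or.inr fun β hβ α hα => ?_
    have hα' : ¬ LtInf α.reverse x := fun hl => hub ((mem u hu α hα).1 hl)
    refine lex_of_ltInf_of_not_ltInf _ _ x ?_ hα'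
    by_contra hβ'
    exact hne (ha ((mem u hu α hα).2 hα') ((mem v hv β hβ).2 hβ') hguv)
  by_cases hs : s.1.1 ∈ D0.below x n
  · have ht : t.1.1 ∉ D0.below x n := fun ht => hq (hb hs ht hg)
    exact Or.inl (key t s h.symm rfl hg.symm (Ne.symm hq) ht)
  · exact Or.inr (key s t rfl h.symm hg hq hs)

end DFA'

/-- `L` is accepted by a DFA admitting a co-lex order with a chain
partition into at most `p` chains iff every set entangled in the minimal DFA
`D0` of `L` has cardinality at most `p`; i.e. `width^D(L) = ent(D0) = ent(L)`. -/
theorem stmt_9 {A Q0 : Type} [LinearOrder A] [Fintype A] [Fintype Q0]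
    (L : Set (List A)) (hLne : L.Nonempty)
    (D0 : DFA' A Q0) (h0reach : D0.Reachable) (h0use : D0.Useful) (hL0 : D0.lang = L)
    (hmin : ∀ α ∈ Pref L, ∀ β ∈ Pref L, NerodeEq L α β →
        D0.deltaStar D0.start α = D0.deltaStar D0.start β)
    (p : ℕ) (hp : 1 ≤ p) :
    (∃ (Q : Type) (_ : Fintype Q) (D : DFA' A Q) (le : Q → Q → Prop)
        (p' : ℕ) (f : Fin p' → Set Q),
        D.Reachable ∧ D.Useful ∧ D.lang = L ∧ IsColexDFA D le ∧
        IsChainPartition le p' f ∧ p' ≤ p) ↔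
      ∀ Q' : Set Q0, D0.Entangled Q' → Q'.ncard ≤ p := by
  constructor
  · rintro ⟨Q, _, D, le, p', f, -, -, hL, hle, hf, hpp⟩ Q' hQ'
    exact (ncard_le_of_colex D0 hL0 hmin D le p' f hL hle hf Q' hQ').trans hpp
  · intro hent
    obtain ⟨k, hk⟩ := exists_window_length D0 h0use p hent
    have hcol : ∀ w : List A, ∃ g : Q0 → Fin p, w.length = k →
        ∃ x n, prefixOf x n <+: w ∧ Set.InjOn g (D0.below x n) ∧
          Set.InjOn g (D0.above x n) := by
      intro w
      by_cases hw : w.length = k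
      · obtain ⟨x, n, hx, hb, ha⟩ := hk w hw
        obtain ⟨g, hgb, hga⟩ := exists_colouring p hp _ _ hb ha
        exact ⟨g, fun _ => ⟨x, n, hx, hgb, hga⟩⟩
      · exact ⟨fun _ => ⟨0, hp⟩, fun h => absurd h hw⟩
    choose g hg using hcol
    refine ⟨D0.MemState k, Fintype.ofFinite _, D0.memory k, (D0.memory k).leD, p,
      fun i => {s | g s.1.2 s.1.1 = i}, D0.memory_reachable k, D0.memory_useful k h0use,
      (D0.memory_lang k).trans hL0, (D0.memory k).isColex_leD (D0.memory_reachable k),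
      ⟨fun s => ⟨_, rfl, fun _ h => h.symm⟩, ?_⟩, le_rfl⟩
    intro i s hs t ht
    by_cases hw : s.1.2 = t.1.2
    · rcases lt_or_ge s.1.2.length k with hlt | hge
      · exact Or.inl (Or.inl (D0.memory_eq_of_length_lt k s t hw hlt))
      · have hlen : s.1.2.length = k := by
          refine le_antisymm ?_ hge
          obtain ⟨α, -, h⟩ := s.2
          rw [← h]
          exact List.length_take_le _ _
        obtain ⟨x, n, hx, hb, ha⟩ := hg _ hlen
        refine D0.memory_comparable_of_window k s t hw x n hx _ hb ha ?_
        have hs' : g s.1.2 s.1.1 = i := hs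
        have ht' : g t.1.2 t.1.1 = i := ht
        rw [hs', hw, ht']
    · exact D0.memory_comparable_of_ne k s t hw
end

section
/- Let L be a nonempty regular language over a finite linearly ordered alphabet Σ, let D₀ = (Q₀, s, δ₀, F₀) be a minimal DFA for L (every state reachable from s, every state useful, and any two Myhill–Nerode equivalent words of Pref(L) reach the same state), and let k ≥ 2. Then width^D(L) ≥ k — i.e., no DFA accepting L admits a co-lex order with a chain partition into fewer than k chains — if and only if there exist words μ_1, …, μ_k and γ, and pairwise distinct states u_1, …, u_k ∈ Q₀, such that for every j = 1, …, k: (1) δ₀(s, μ_j) = u_j; (2) δ₀(u_j, γ) = u_j (γ labels a cycle at u_j); (3) either μ_j ≺ γ for all j, or γ ≺ μ_j for all j (strict co-lex order on words); and (4) γ is not a suffix of μ_j. -/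
namespace ColexWidth

/-! ### Lexicographic comparison of reversed words -/

section Words

variable {A : Type} [LinearOrder A]

theorem colexLt_iff {α β : List A} : colexLt α β ↔ α.reverse < β.reverse := Iff.rfl

theorem append_lt_append_left_iff (s : List A) {x y : List A} :
    s ++ x < s ++ y ↔ x < y := by
  induction s with
  | nil => rfl
  | cons a s ih => simpa [List.cons_lt_cons_iff] using ih

theorem le_append (x z : List A) : x ≤ x ++ z := by
  rw [← not_lt]
  intro h
  have h2 : x ++ z < x ++ [] := by simpa using h
  rw [append_lt_append_left_iff] at h2
  exact List.not_lt_nil _ h2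

theorem lt_append (x : List A) {z : List A} (hz : z ≠ []) : x < x ++ z :=
  lt_of_le_of_ne (le_append x z) (by simpa using hz)

/-- Past the first difference, what follows is irrelevant. -/
theorem append_lt_of_lt {x r : List A} (h : x < r) (hp : ¬ x <+: r) (z : List A) :
    x ++ z < r := by
  induction x generalizing r with
  | nil => simp at hp
  | cons a x ih =>
    cases r with
    | nil => exact absurd h (List.not_lt_nil _)
    | cons b r =>
      rw [List.cons_lt_cons_iff] at h
      rw [List.cons_append, List.cons_lt_cons_iff]
      rcases h with h | ⟨rfl, h⟩
      · exact Or.inl h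
      · exact Or.inr ⟨rfl, ih h (fun hp' => hp (by simpa using hp'))⟩

theorem lt_of_take_lt {m : ℕ} {x y : List A} (h : x.take m < y.take m) : x < y := by
  induction m generalizing x y with
  | zero => simp at h
  | succ m ih =>
    cases y with
    | nil => simp at h
    | cons b y =>
      cases x with
      | nil => exact List.nil_lt_cons _ _
      | cons a x =>
        rw [List.take_succ_cons, List.take_succ_cons, List.cons_lt_cons_iff] at h
        rw [List.cons_lt_cons_iff]
        exact h.imp id (fun ⟨h1, h2⟩ => ⟨h1, ih h2⟩)

end Words

/-- The `n`-th power of a word. -/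
def pw {A : Type} (x : List A) : ℕ → List A
  | 0 => []
  | n + 1 => x ++ pw x n

section Powers

variable {A : Type}

theorem pw_add (x : List A) (m n : ℕ) : pw x (m + n) = pw x m ++ pw x n := by
  induction m with
  | zero => simp [pw]
  | succ m ih => rw [Nat.succ_add]; simp [pw, ih]

theorem pw_one (x : List A) : pw x 1 = x := by simp [pw]

theorem pw_reverse (x : List A) (n : ℕ) : (pw x n).reverse = pw x.reverse n := by
  induction n with
  | zero => rfl
  | succ n ih =>
    rw [pw_add x.reverse n 1, pw_one]
    simp [pw, ih]

theorem length_pw (x : List A) (n : ℕ) : (pw x n).length = n * x.length := by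
  induction n with
  | zero => simp [pw]
  | succ n ih => simp [pw, ih]; ring

theorem pw_mono [LinearOrder A] (x : List A) {m n : ℕ} (h : m ≤ n) : pw x m ≤ pw x n := by
  obtain ⟨d, rfl⟩ := Nat.exists_eq_add_of_le h
  rw [pw_add]
  exact le_append _ _

end Powers

/-! ### Runs of partial automata -/

section Runs

variable {A Q : Type}

theorem deltaStar_append (D : DFA' A Q) (q : Q) (x y : List A) :
    D.deltaStar q (x ++ y) = (D.deltaStar q x).bind fun r => D.deltaStar r y := by
  induction x generalizing q with
  | nil => rfl
  | cons a x ih =>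
    simp only [List.cons_append, DFA'.deltaStar]
    cases D.delta q a with
    | none => rfl
    | some r => simp [ih]

theorem deltaStar_append_of (D : DFA' A Q) {q r : Q} {x : List A} (h : D.deltaStar q x = some r)
    (y : List A) : D.deltaStar q (x ++ y) = D.deltaStar r y := by
  rw [deltaStar_append, h]; rfl

theorem deltaStar_append_eq_some (D : DFA' A Q) {q t : Q} {x y : List A} :
    D.deltaStar q (x ++ y) = some t ↔
      ∃ r, D.deltaStar q x = some r ∧ D.deltaStar r y = some t := by
  rw [deltaStar_append, Option.bind_eq_some_iff]

theorem deltaStar_singleton (D : DFA' A Q) (q : Q) (a : A) : D.deltaStar q [a] = D.delta q a := by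
  simp [DFA'.deltaStar]

theorem deltaStar_pw (D : DFA' A Q) {q : Q} {x : List A} (h : D.deltaStar q x = some q) (n : ℕ) :
    D.deltaStar q (pw x n) = some q := by
  induction n with
  | zero => rfl
  | succ n ih => rw [pw, deltaStar_append_of D h, ih]

theorem mem_Pref_of_deltaStar {D : DFA' A Q} (hu : D.Useful) {α : List A} {q : Q}
    (h : D.deltaStar D.start α = some q) : α ∈ Pref D.lang := by
  obtain ⟨β, f, hf, hβ⟩ := hu q
  exact ⟨β, f, hf, by rw [deltaStar_append_of D h, hβ]⟩

theorem exists_deltaStar_of_mem_Pref {D : DFA' A Q} {α : List A} (h : α ∈ Pref D.lang) :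
    ∃ q, D.deltaStar D.start α = some q := by
  obtain ⟨β, f, hf, hβ⟩ := h
  obtain ⟨r, hr, -⟩ := (deltaStar_append_eq_some D).1 hβ
  exact ⟨r, hr⟩

theorem nerodeEq_of_deltaStar {D : DFA' A Q} {α β : List A} {q : Q}
    (hα : D.deltaStar D.start α = some q) (hβ : D.deltaStar D.start β = some q) :
    NerodeEq D.lang α β := by
  intro γ
  simp [DFA'.lang, deltaStar_append_of D hα, deltaStar_append_of D hβ]

/-- Some positive power of `x` acts idempotently on the states: the actions of `x, x², …` lie in a
finite set, so they are eventually periodic. -/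
theorem exists_idempotent_pw [Finite Q] (D : DFA' A Q) (x : List A) :
    ∃ e, 0 < e ∧ ∀ q, D.deltaStar q (pw x (e + e)) = D.deltaStar q (pw x e) := by
  obtain ⟨a, b, hab, heq⟩ := Finite.exists_ne_map_eq_of_infinite
    (fun n : ℕ => fun q : Q => D.deltaStar q (pw x n))
  wlog hlt : a < b generalizing a b
  · exact this b a hab.symm heq.symm (by omega)
  obtain ⟨d, rfl⟩ := Nat.exists_eq_add_of_lt hlt
  have step : ∀ n q, D.deltaStar q (pw x (a + n + (d + 1))) = D.deltaStar q (pw x (a + n)) := by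
    intro n q
    have h : D.deltaStar q (pw x a) = D.deltaStar q (pw x (a + d + 1)) := congrFun heq q
    rw [show a + n + (d + 1) = (a + d + 1) + n by ring, pw_add, pw_add x a n, deltaStar_append,
      deltaStar_append, h]
  have steps : ∀ c n q, D.deltaStar q (pw x (a + n + c * (d + 1))) =
      D.deltaStar q (pw x (a + n)) := by
    intro c
    induction c with
    | zero => simp
    | succ c ih =>
      intro n q
      rw [show a + n + (c + 1) * (d + 1) = a + (n + c * (d + 1)) + (d + 1) by ring, step,
        ← add_assoc, ih]
  refine ⟨(a + 1) * (d + 1), by positivity, fun q => ?_⟩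
  obtain ⟨n, hn⟩ := Nat.exists_eq_add_of_le (show a ≤ (a + 1) * (d + 1) by nlinarith)
  have h := steps (a + 1) n q
  rwa [← hn] at h

end Runs

/-! ### Co-lex orders and words -/

section Order

variable {A Q : Type} [LinearOrder A]

/-- Two distinct states comparable in a co-lex order have all their words compared the same way:
strip common last letters until the letters, or the lengths, differ. -/
theorem colexLt_of_le {D : DFA' A Q} {le : Q → Q → Prop} (h : IsColexDFA D le)
    (α : List A) : ∀ (β : List A) (u v : Q), le u v → u ≠ v → α ∈ D.Iq u → β ∈ D.Iq v →
      colexLt α β := by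
  induction α using List.reverseRecOn with
  | nil =>
    intro β u v huv hne hα hβ
    rw [colexLt_iff]
    rcases β.eq_nil_or_concat with rfl | ⟨β, b, rfl⟩
    · exact absurd (Option.some.inj (hα.symm.trans hβ)) hne
    · simp
  | append_singleton α a ih =>
    intro β u v huv hne hα hβ
    obtain ⟨u', hu', hua⟩ := (deltaStar_append_eq_some D).1 hα
    rw [deltaStar_singleton] at hua
    have ha : (a : WithBot A) ∈ D.lam u := Or.inl ⟨a, u', rfl, hua⟩
    rw [colexLt_iff]
    rcases β.eq_nil_or_concat' with rfl | ⟨β, b, rfl⟩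
    · have hv : v = D.start := (Option.some.inj hβ).symm
      have := h.ax1 u v huv hne a ha ⊥ (Or.inr ⟨hv, rfl⟩)
      simp at this
    · obtain ⟨v', hv', hvb⟩ := (deltaStar_append_eq_some D).1 hβ
      rw [deltaStar_singleton] at hvb
      have hab := h.ax1 u v huv hne a ha b (Or.inl ⟨b, v', rfl, hvb⟩)
      rw [WithBot.coe_le_coe] at hab
      simp only [List.reverse_append, List.reverse_cons, List.reverse_nil, List.nil_append,
        List.singleton_append, List.cons_lt_cons_iff]
      rcases hab.lt_or_eq with hab | rfl
      · exact Or.inl hab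
      · refine Or.inr ⟨rfl, ih β u' v' (h.ax2 a u v u' v' hua hvb huv hne) ?_ hu' hv'⟩
        rintro rfl
        exact hne (Option.some.inj (hua.symm.trans hvb))

/-- Every word reaching `u` precedes every word reaching `v`. -/
def below (D : DFA' A Q) (u v : Q) : Prop :=
  ∀ α ∈ D.Iq u, ∀ β ∈ D.Iq v, colexLt α β

theorem below_irrefl {D : DFA' A Q} (hr : D.Reachable) (u : Q) : ¬ below D u u := by
  obtain ⟨α, hα⟩ := hr u
  intro h
  exact lt_irrefl _ (colexLt_iff.1 (h α hα α hα))

theorem below_trans {D : DFA' A Q} (hr : D.Reachable) {u v w : Q} (h1 : below D u v)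
    (h2 : below D v w) : below D u w := by
  obtain ⟨β, hβ⟩ := hr v
  intro α hα γ hγ
  exact lt_trans (colexLt_iff.1 (h1 α hα β hβ)) (colexLt_iff.1 (h2 β hβ γ hγ))

/-- `below` is an interval order. -/
theorem below_interval {D : DFA' A Q} {a b c d : Q} (h1 : below D a b)
    (h2 : below D c d) : below D a d ∨ below D c b := by
  rw [or_iff_not_imp_left]
  intro h3
  unfold below at h3
  push Not at h3
  obtain ⟨α, hα, δ, hδ, hαδ⟩ := h3
  rw [colexLt_iff, not_lt] at hαδ
  intro γ hγ β hβ
  exact lt_of_lt_of_le (colexLt_iff.1 (h2 γ hγ δ hδ))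
    (hαδ.trans (le_of_lt (colexLt_iff.1 (h1 α hα β hβ))))

/-- The relation `≤_D` is a co-lex order whenever all states are reachable. -/
theorem isColexDFA_leD {D : DFA' A Q} (hr : D.Reachable) : IsColexDFA D D.leD where
  refl u := Or.inl rfl
  antisymm u v := by
    rintro (h | h) (h' | h')
    · exact h
    · exact h
    · exact h'.symm
    · exact absurd (below_trans hr h h') (below_irrefl hr u)
  trans u v w := by
    rintro (rfl | h) (rfl | h')
    · exact Or.inl rfl
    · exact Or.inr h'
    · exact Or.inr h
    · exact Or.inr (below_trans hr h h')
  ax1 u v := by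
    rintro (h | h) hne
    · exact absurd h hne
    rintro x (⟨a, u', rfl, hu⟩ | ⟨hu, rfl⟩) y hy
    · obtain ⟨α, hα⟩ := hr u'
      have hαa : α ++ [a] ∈ D.Iq u := by
        change D.deltaStar _ _ = _
        rw [deltaStar_append_of D hα, deltaStar_singleton, hu]
      rcases hy with ⟨b, v', rfl, hv⟩ | ⟨hv, rfl⟩
      · obtain ⟨β, hβ⟩ := hr v'
        have hβb : β ++ [b] ∈ D.Iq v := by
          change D.deltaStar _ _ = _
          rw [deltaStar_append_of D hβ, deltaStar_singleton, hv]
        have := colexLt_iff.1 (h _ hαa _ hβb)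
        simp only [List.reverse_append, List.reverse_cons, List.reverse_nil, List.nil_append,
          List.singleton_append, List.cons_lt_cons_iff] at this
        rw [WithBot.coe_le_coe]
        rcases this with h | ⟨h, -⟩
        · exact h.le
        · exact h.le
      · have hnil : [] ∈ D.Iq v := by rw [hv]; rfl
        exact absurd (colexLt_iff.1 (h _ hαa _ hnil)) (List.not_lt_nil _)
    · exact bot_le
  ax2 a u v u' v' hu hv := by
    rintro (h | h) hne
    · exact absurd h hne
    refine Or.inr fun α hα β hβ => ?_
    have h1 : α ++ [a] ∈ D.Iq u := by
      change D.deltaStar _ _ = _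
      rw [deltaStar_append_of D hα, deltaStar_singleton, hu]
    have h2 : β ++ [a] ∈ D.Iq v := by
      change D.deltaStar _ _ = _
      rw [deltaStar_append_of D hβ, deltaStar_singleton, hv]
    have := colexLt_iff.1 (h _ h1 _ h2)
    rw [List.reverse_append, List.reverse_append, append_lt_append_left_iff] at this
    exact this

end Order

/-- Dilworth's theorem for finite interval orders: without an antichain of size `w + 1`, the
elements of `S` split into `w` chains. Colour an element with the most predecessors last; if each
colour holds an element not below it, these elements form with it an antichain. -/
theorem interval_order_coloring {Q : Type} (lt : Q → Q → Prop)
    (irrefl : ∀ a, ¬ lt a a)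
    (interval : ∀ a b c d, lt a b → lt c d → lt a d ∨ lt c b)
    (w : ℕ) (hw : 0 < w)
    (hanti : ∀ v : Fin (w + 1) → Q, Function.Injective v → ∃ i j, i ≠ j ∧ lt (v i) (v j))
    (S : Finset Q) :
    ∃ c : Q → Fin w, ∀ a ∈ S, ∀ b ∈ S, c a = c b → a = b ∨ lt a b ∨ lt b a := by
  classical
  induction hn : S.card generalizing S with
  | zero =>
    rw [Finset.card_eq_zero] at hn
    exact ⟨fun _ => ⟨0, hw⟩, by simp [hn]⟩
  | succ n ih =>
    have hne : S.Nonempty := by rw [← Finset.card_pos]; omega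
    obtain ⟨u, huS, hu⟩ := S.exists_max_image (fun v => (S.filter (fun x => lt x v)).card) hne
    -- Predecessor sets in an interval order are nested, so maximal size means largest.
    have hpred : ∀ v ∈ S, ∀ x ∈ S, lt x v → lt x u := by
      intro v hv x hx hxv
      by_contra hxu
      have hss : S.filter (fun y => lt y u) ⊂ S.filter (fun y => lt y v) := by
        rw [Finset.ssubset_iff_of_subset]
        · exact ⟨x, by simp [hx, hxv], by simp [hxu]⟩
        · intro y hy
          rw [Finset.mem_filter] at hy ⊢
          refine ⟨hy.1, ?_⟩
          rcases interval _ _ _ _ hy.2 hxv with h | h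
          · exact h
          · exact absurd h hxu
      exact absurd (Finset.card_lt_card hss) (not_lt.2 (hu v hv))
    obtain ⟨c, hc⟩ := ih (S.erase u) (by rw [Finset.card_erase_of_mem huS]; omega)
    by_cases hgood : ∃ i, ∀ x ∈ S.erase u, c x = i → lt x u
    · obtain ⟨i, hi⟩ := hgood
      refine ⟨Function.update c u i, fun a ha b hb hab => ?_⟩
      by_cases hau : a = u <;> by_cases hbu : b = u
      · exact Or.inl (hau.trans hbu.symm)
      · subst hau
        rw [Function.update_self, Function.update_of_ne hbu] at hab
        exact Or.inr (Or.inr (hi b (Finset.mem_erase.2 ⟨hbu, hb⟩) hab.symm))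
      · subst hbu
        rw [Function.update_self, Function.update_of_ne hau] at hab
        exact Or.inr (Or.inl (hi a (Finset.mem_erase.2 ⟨hau, ha⟩) hab))
      · rw [Function.update_of_ne hau, Function.update_of_ne hbu] at hab
        exact hc a (Finset.mem_erase.2 ⟨hau, ha⟩) b (Finset.mem_erase.2 ⟨hbu, hb⟩) hab
    · exfalso
      push Not at hgood
      choose x hxS hxc hxu using hgood
      have hxS' : ∀ i, x i ∈ S := fun i => Finset.mem_of_mem_erase (hxS i)
      have hinj : Function.Injective x := fun i j h => by rw [← hxc i, ← hxc j, h]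
      obtain ⟨i, j, hij, hlt⟩ := hanti (Fin.cons u x) (by
        rw [Fin.cons_injective_iff]
        refine ⟨?_, hinj⟩
        rintro ⟨i, hi⟩
        exact Finset.ne_of_mem_erase (hxS i) hi)
      -- Whatever is below some element of `S` is below `u`.
      induction i using Fin.cases with
      | zero =>
        induction j using Fin.cases with
        | zero => exact hij rfl
        | succ j => exact irrefl u (hpred (x j) (hxS' j) u huS (by simpa using hlt))
      | succ i =>
        induction j using Fin.cases with
        | zero => exact hxu i (by simpa using hlt)
        | succ j => exact hxu i (hpred (x j) (hxS' j) (x i) (hxS' i) (by simpa using hlt))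

/-! ### From a configuration to a lower bound on the width -/

section LowerBound

variable {A Q0 : Type}

/-- If `D` has the language of the minimal automaton `D0`, a state of `D` determines the state of
`D0` reached by the same words. -/
theorem state_eq_of_state_eq {Q : Type} {D0 : DFA' A Q0} (h0use : D0.Useful)
    (hmin : ∀ α ∈ Pref D0.lang, ∀ β ∈ Pref D0.lang, NerodeEq D0.lang α β →
        D0.deltaStar D0.start α = D0.deltaStar D0.start β)
    {D : DFA' A Q} (hlang : D.lang = D0.lang) {α β : List A} {u v : Q0} {q : Q}
    (hu : D0.deltaStar D0.start α = some u) (hv : D0.deltaStar D0.start β = some v)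
    (hα : D.deltaStar D.start α = some q) (hβ : D.deltaStar D.start β = some q) : u = v := by
  have h := hmin α (mem_Pref_of_deltaStar h0use hu) β (mem_Pref_of_deltaStar h0use hv)
    (hlang ▸ nerodeEq_of_deltaStar hα hβ)
  exact Option.some.inj (hu.symm.trans (h.trans hv))

theorem le_of_configuration [LinearOrder A] {Q : Type} [Finite Q] {D0 : DFA' A Q0} (h0use : D0.Useful)
    (hmin : ∀ α ∈ Pref D0.lang, ∀ β ∈ Pref D0.lang, NerodeEq D0.lang α β →
        D0.deltaStar D0.start α = D0.deltaStar D0.start β)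
    {D : DFA' A Q} (hlang : D.lang = D0.lang) {le : Q → Q → Prop} (hle : IsColexDFA D le)
    {p k : ℕ} {f : Fin p → Set Q} (hf : IsChainPartition le p f)
    {μ : Fin k → List A} {γ : List A} {u : Fin k → Q0} (hinj : Function.Injective u)
    (hμ : ∀ j, D0.deltaStar D0.start (μ j) = some (u j))
    (hγ : ∀ j, D0.deltaStar (u j) γ = some (u j))
    (hside : (∀ j, colexLt (μ j) γ) ∨ (∀ j, colexLt γ (μ j)))
    (hsuf : ∀ j, ¬ γ <:+ μ j) : k ≤ p := by
  have hreach : ∀ j n, D0.deltaStar D0.start (μ j ++ pw γ n) = some (u j) := fun j n => by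
    rw [deltaStar_append_of D0 (hμ j), deltaStar_pw D0 (hγ j)]
  -- The words `μ j ++ γ ^ n` are ordered by `n`, in a direction that depends only on the side.
  have hmono : (∀ i j n n', n < n' → colexLt (μ i ++ pw γ n) (μ j ++ pw γ n')) ∨
      (∀ i j n n', n < n' → colexLt (μ j ++ pw γ n') (μ i ++ pw γ n)) := by
    refine hside.imp (fun hs i j n n' hn => ?_) (fun hs i j n n' hn => ?_) <;>
    · obtain ⟨d, rfl⟩ := Nat.exists_eq_add_of_lt hn
      rw [colexLt_iff, List.reverse_append, List.reverse_append, pw_reverse, pw_reverse,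
        add_assoc, pw_add, List.append_assoc, append_lt_append_left_iff, pw, List.append_assoc]
      first
      | exact lt_of_lt_of_le (colexLt_iff.1 (hs i)) (le_append _ _)
      | exact append_lt_of_lt (colexLt_iff.1 (hs i))
          (fun h => hsuf i (List.reverse_prefix.1 h)) _
  have hD : ∀ j n, ∃ q, D.deltaStar D.start (μ j ++ pw γ n) = some q := fun j n =>
    exists_deltaStar_of_mem_Pref (hlang ▸ mem_Pref_of_deltaStar h0use (hreach j n))
  choose s hs using hD
  have hinf : ∀ j, ∃ q, {n | s j n = q}.Infinite := by
    intro j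
    obtain ⟨q, hq⟩ := Finite.exists_infinite_fiber (s j)
    exact ⟨q, Set.infinite_coe_iff.1 hq⟩
  choose q hq using hinf
  have hqs : ∀ j N, ∃ n, N < n ∧ μ j ++ pw γ n ∈ D.Iq (q j) := by
    intro j N
    obtain ⟨n, hn, hN⟩ := (hq j).exists_gt N
    exact ⟨n, hN, by rw [← show s j n = q j from hn]; exact hs j n⟩
  choose c hc _ using hf.1
  by_contra hlt
  obtain ⟨i, j, hij, hcij⟩ := Fintype.exists_ne_map_eq_of_card_lt (fun j => c (q j))
    (by simpa using hlt)
  have hne : ∀ i j, i ≠ j → q i ≠ q j := by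
    intro i j hij heq
    obtain ⟨n, -, hn⟩ := hqs i 0
    obtain ⟨n', -, hn'⟩ := hqs j 0
    rw [← heq] at hn'
    exact hij (hinj (state_eq_of_state_eq h0use hmin hlang (hreach i n) (hreach j n') hn hn'))
  have key : ∀ i j, i ≠ j → ¬ le (q i) (q j) := by
    intro i j hij h
    have hlt := fun α β => colexLt_of_le hle α β _ _ h (hne i j hij)
    rcases hmono with hm | hm
    · obtain ⟨n, -, hn⟩ := hqs j 0
      obtain ⟨n', hnn, hn'⟩ := hqs i n
      exact lt_asymm (colexLt_iff.1 (hlt _ _ hn' hn)) (colexLt_iff.1 (hm j i n n' hnn))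
    · obtain ⟨n, -, hn⟩ := hqs i 0
      obtain ⟨n', hnn, hn'⟩ := hqs j n
      exact lt_asymm (colexLt_iff.1 (hlt _ _ hn hn')) (colexLt_iff.1 (hm i j n n' hnn))
  have hcj := hc (q j)
  rw [← hcij] at hcj
  rcases hf.2 _ _ (hc (q i)) _ hcj with h | h
  · exact key i j hij h
  · exact key j i hij.symm h

end LowerBound

/-! ### The automaton that remembers the last letters read -/

section Suffix

variable {A Q0 : Type}

/-- States of the suffix automaton: the reachable pairs of a state of `D0` and the last `m` letters
read (all of them, if fewer), listed from the most recent to the oldest. -/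
abbrev SuffixState (D0 : DFA' A Q0) (m : ℕ) : Type :=
  {s : Q0 × List A // ∃ w, D0.deltaStar D0.start w = some s.1 ∧ w.reverse.take m = s.2}

theorem finite_suffixState [Finite A] [Finite Q0] (D0 : DFA' A Q0) (m : ℕ) :
    Finite (SuffixState D0 m) := by
  have hfin : (Set.univ ×ˢ {l : List A | l.length ≤ m} : Set (Q0 × List A)).Finite :=
    Set.finite_univ.prod (List.finite_length_le A m)
  have : Finite {s : Q0 × List A // s ∈ (Set.univ ×ˢ {l : List A | l.length ≤ m})} := hfin
  refine Finite.of_injective (β := {s : Q0 × List A // s ∈ (Set.univ ×ˢ {l : List A | l.length ≤ m})})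
    (fun s : SuffixState D0 m => ⟨s.1, ?_⟩) ?_
  · obtain ⟨s, w, -, hw⟩ := s
    simp only [Set.mem_prod, Set.mem_univ, true_and, Set.mem_ofPred_eq]
    rw [← hw, List.length_take]
    exact min_le_left _ _
  · intro s t h
    exact Subtype.ext (congrArg (fun x => x.1) h)

theorem suffix_step {D0 : DFA' A Q0} {m : ℕ} (s : SuffixState D0 m) (a : A) {q : Q0}
    (h : D0.delta s.1.1 a = some q) :
    ∃ w, D0.deltaStar D0.start w = some (q, (a :: s.1.2).take m).1 ∧
      w.reverse.take m = (q, (a :: s.1.2).take m).2 := by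
  obtain ⟨w, hw, hx⟩ := s.2
  refine ⟨w ++ [a], ?_, ?_⟩
  · rw [deltaStar_append_of D0 hw, deltaStar_singleton, h]
  · rw [← hx]
    cases m with
    | zero => simp
    | succ m => simp [List.take_take]

/-- The suffix automaton: `D0` with the last `m` letters read stored in the state. -/
def suffixDFA (D0 : DFA' A Q0) (m : ℕ) : DFA' A (SuffixState D0 m) where
  start := ⟨(D0.start, []), [], rfl, by simp⟩
  delta s a :=
    match h : D0.delta s.1.1 a with
    | none => none
    | some q => some ⟨(q, (a :: s.1.2).take m), suffix_step s a h⟩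
  accept := {s | s.1.1 ∈ D0.accept}

theorem suffixDFA_delta (D0 : DFA' A Q0) (m : ℕ) (s t : SuffixState D0 m) (a : A) :
    (suffixDFA D0 m).delta s a = some t ↔
      D0.delta s.1.1 a = some t.1.1 ∧ t.1.2 = (a :: s.1.2).take m := by
  simp only [suffixDFA]
  split
  · next h => simp [h]
  · next q h =>
    simp only [h, Option.some_inj]
    constructor
    · rintro rfl
      exact ⟨rfl, rfl⟩
    · rintro ⟨h1, h2⟩
      exact Subtype.ext (Prod.ext h1 h2.symm)

theorem suffixDFA_deltaStar (D0 : DFA' A Q0) (m : ℕ) (w : List A) (t : SuffixState D0 m) :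
    (suffixDFA D0 m).deltaStar (suffixDFA D0 m).start w = some t ↔
      D0.deltaStar D0.start w = some t.1.1 ∧ w.reverse.take m = t.1.2 := by
  induction w using List.reverseRecOn generalizing t with
  | nil =>
    simp only [DFA'.deltaStar, Option.some_inj, List.reverse_nil, List.take_nil]
    constructor
    · rintro rfl
      exact ⟨rfl, rfl⟩
    · rintro ⟨h1, h2⟩
      exact Subtype.ext (Prod.ext h1 h2)
  | append_singleton w a ih =>
    have htake : ∀ x : List A, (a :: x.take m).take m = (a :: x).take m := by
      intro x
      cases m with
      | zero => simp
      | succ m => simp [List.take_take]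
    simp only [deltaStar_append_eq_some, deltaStar_singleton, suffixDFA_delta, ih]
    simp only [List.reverse_append, List.reverse_cons, List.reverse_nil, List.nil_append,
      List.singleton_append]
    constructor
    · rintro ⟨r, ⟨h1, h2⟩, h3, h4⟩
      exact ⟨⟨_, h1, h3⟩, by rw [h4, ← h2, htake]⟩
    · rintro ⟨⟨r, h1, h2⟩, h3⟩
      exact ⟨⟨(r, w.reverse.take m), w, h1, rfl⟩, ⟨h1, rfl⟩, h2, by rw [← h3, htake]⟩

theorem suffixDFA_exists (D0 : DFA' A Q0) (m : ℕ) {w : List A} {q : Q0}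
    (h : D0.deltaStar D0.start w = some q) :
    ∃ t : SuffixState D0 m, t.1.1 = q ∧
      (suffixDFA D0 m).deltaStar (suffixDFA D0 m).start w = some t :=
  ⟨⟨(q, w.reverse.take m), w, h, rfl⟩, rfl, (suffixDFA_deltaStar D0 m _ _).2 ⟨h, rfl⟩⟩

theorem suffixDFA_lang (D0 : DFA' A Q0) (m : ℕ) : (suffixDFA D0 m).lang = D0.lang := by
  ext w
  constructor
  · rintro ⟨t, ht, hw⟩
    exact ⟨t.1.1, ht, ((suffixDFA_deltaStar D0 m w t).1 hw).1⟩
  · rintro ⟨q, hq, hw⟩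
    obtain ⟨t, rfl, ht⟩ := suffixDFA_exists D0 m hw
    exact ⟨t, hq, ht⟩

theorem suffixDFA_reachable (D0 : DFA' A Q0) (m : ℕ) : (suffixDFA D0 m).Reachable := by
  intro t
  obtain ⟨w, hw⟩ := t.2
  exact ⟨w, (suffixDFA_deltaStar D0 m w t).2 hw⟩

theorem suffixDFA_useful {D0 : DFA' A Q0} (h0use : D0.Useful) (m : ℕ) :
    (suffixDFA D0 m).Useful := by
  intro t
  obtain ⟨w, hw⟩ := suffixDFA_reachable D0 m t
  obtain ⟨β, f, hf, hβ⟩ := h0use t.1.1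
  have h := deltaStar_append_of D0 ((suffixDFA_deltaStar D0 m w t).1 hw).1 β
  rw [hβ] at h
  obtain ⟨r, rfl, hr⟩ := suffixDFA_exists D0 m h
  exact ⟨β, r, hf, by rw [← deltaStar_append_of _ hw, hr]⟩

/-- States of the suffix automaton that are incomparable for `below` remember the same suffix. -/
theorem suffix_eq_of_not_below [LinearOrder A] {D0 : DFA' A Q0} {m : ℕ} {s t : SuffixState D0 m}
    (h1 : ¬ below (suffixDFA D0 m) s t) (h2 : ¬ below (suffixDFA D0 m) t s) : s.1.2 = t.1.2 := by
  have key : ∀ s t : SuffixState D0 m, s.1.2 < t.1.2 → below (suffixDFA D0 m) s t := by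
    intro s t h α hα β hβ
    have hα' := ((suffixDFA_deltaStar D0 m α s).1 hα).2
    have hβ' := ((suffixDFA_deltaStar D0 m β t).1 hβ).2
    rw [← hα', ← hβ'] at h
    exact lt_of_take_lt h
  by_contra hne
  rcases lt_or_gt_of_ne hne with h | h
  · exact h1 (key _ _ h)
  · exact h2 (key _ _ h)

/-- A remembered suffix shorter than `m` is the whole word, so it determines the state. -/
theorem eq_of_short_suffix {D0 : DFA' A Q0} {m : ℕ} {s t : SuffixState D0 m}
    (h : s.1.2 = t.1.2) (hlen : s.1.2.length < m) : s = t := by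
  obtain ⟨α, hα, hα'⟩ := s.2
  obtain ⟨β, hβ, hβ'⟩ := t.2
  have full : ∀ (w x : List A), w.reverse.take m = x → x.length < m → w.reverse = x := by
    rintro w x rfl hl
    rw [List.length_take] at hl
    exact (List.take_of_length_le (by omega)).symm
  have hαβ : α = β := List.reverse_injective
    ((full α _ hα' hlen).trans (h.trans (full β _ hβ' (h ▸ hlen)).symm))
  subst hαβ
  exact Subtype.ext (Prod.ext (Option.some.inj (hα.symm.trans hβ)) h)

end Suffix

/-! ### From an antichain to a configuration -/

section Configuration

variable {A Q0 : Type} [LinearOrder A]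

/-- An antichain of size `k` in the suffix automaton with a long enough memory yields `k` states of
`D0` with a common cycle label. Reading the common suffix backwards from the `k` states and keeping
the sets of states that lead to them, some tuple of sets repeats, and the word between the two
occurrences supplies the cycle. -/
theorem configuration_of_antichain [Finite Q0] {D0 : DFA' A Q0} {k m : ℕ} (hk : 2 ≤ k)
    (hm : m = Nat.card (Fin k → Set Q0)) (v : Fin k → SuffixState D0 m)
    (hinj : Function.Injective v)
    (hanti : ∀ i j, i ≠ j → ¬ below (suffixDFA D0 m) (v i) (v j)) :
    ∃ (μ : Fin k → List A) (γ : List A) (u : Fin k → Q0),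
        Function.Injective u ∧
        (∀ j, D0.deltaStar D0.start (μ j) = some (u j)) ∧
        (∀ j, D0.deltaStar (u j) γ = some (u j)) ∧
        ((∀ j, colexLt (μ j) γ) ∨ (∀ j, colexLt γ (μ j))) ∧
        (∀ j, ¬ γ <:+ μ j) := by
  have hreach := suffixDFA_reachable D0 m
  let i0 : Fin k := ⟨0, by omega⟩
  let i1 : Fin k := ⟨1, by omega⟩
  have h01 : i0 ≠ i1 := by simp [i0, i1]
  obtain ⟨x, hx⟩ : ∃ x, ∀ i, (v i).1.2 = x := by
    refine ⟨(v i0).1.2, fun i => ?_⟩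
    by_cases hi : i = i0
    · rw [hi]
    · exact suffix_eq_of_not_below (hanti i i0 hi) (hanti i0 i (Ne.symm hi))
  have hxm : m ≤ x.length := by
    by_contra! h
    exact h01 (hinj (eq_of_short_suffix ((hx i0).trans (hx i1).symm) (by rw [hx]; exact h)))
  -- `T t i` is the set of states that the last `t` letters of the common suffix send to `v i`.
  let T : ℕ → Fin k → Set Q0 := fun t i =>
    {p | D0.deltaStar p (x.take t).reverse = some (v i).1.1}
  have hT : ∀ t i p, p ∈ T t i ↔ D0.deltaStar p (x.take t).reverse = some (v i).1.1 :=
    fun _ _ _ => Iff.rfl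
  obtain ⟨t, t', htt, ht', hTeq⟩ : ∃ t t', t < t' ∧ t' ≤ m ∧ T t = T t' := by
    by_contra! h
    have hin : Function.Injective (fun t : Fin (m + 1) => T t) := by
      intro a b hab
      by_contra hne
      rcases lt_or_gt_of_ne (fun h => hne (Fin.ext h) : (a : ℕ) ≠ b) with hlt | hlt
      · exact h a b hlt (by omega) hab
      · exact h b a hlt (by omega) hab.symm
    have := Nat.card_le_card_of_injective _ hin
    rw [Nat.card_fin, ← hm] at this
    omega
  -- The letters between the two positions form a word `ρ.reverse` mapping each `T t' i` to itself.
  obtain ⟨d, rfl⟩ := Nat.exists_eq_add_of_lt htt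
  set ρ := (x.drop t).take (d + 1) with hρ
  have hρlen : ρ.length = d + 1 := by
    rw [hρ, List.length_take, List.length_drop]; omega
  set y := x.take (t + d + 1) with hy
  have hyρ : y = x.take t ++ ρ := by rw [hy, hρ, add_assoc, List.take_add]
  have hstep : ∀ i, ∀ p ∈ T (t + d + 1) i, ∃ p' ∈ T (t + d + 1) i,
      D0.deltaStar p ρ.reverse = some p' := by
    intro i p hp
    rw [hT, ← hy, hyρ, List.reverse_append, deltaStar_append_eq_some] at hp
    obtain ⟨p', h1, h2⟩ := hp
    exact ⟨p', by rw [← hTeq]; exact h2, h1⟩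
  have hpow : ∀ n i, ∀ p ∈ T (t + d + 1) i, ∃ p' ∈ T (t + d + 1) i,
      D0.deltaStar p (pw ρ.reverse n) = some p' := by
    intro n i
    induction n with
    | zero => exact fun p hp => ⟨p, hp, rfl⟩
    | succ n ih =>
      intro p hp
      obtain ⟨p', hp', h⟩ := hstep i p hp
      obtain ⟨p'', hp'', h'⟩ := ih p' hp'
      exact ⟨p'', hp'', by rw [pw, deltaStar_append_of D0 h, h']⟩
  have hIq : ∀ i, ∀ w ∈ (suffixDFA D0 m).Iq (v i), ∃ α, w = α ++ y.reverse ∧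
      ∃ p ∈ T (t + d + 1) i, D0.deltaStar D0.start α = some p := by
    intro i w hw
    obtain ⟨h1, h2⟩ := (suffixDFA_deltaStar D0 m w (v i)).1 hw
    rw [hx] at h2
    have hpre : y <+: w.reverse := (List.take_prefix _ _).trans (h2 ▸ List.take_prefix _ _)
    obtain ⟨z, hz⟩ := hpre
    have hw' : w = z.reverse ++ y.reverse := by
      rw [← List.reverse_append, hz, List.reverse_reverse]
    rw [hw', deltaStar_append_eq_some] at h1
    obtain ⟨p, hp1, hp2⟩ := h1
    exact ⟨_, hw', p, hp2, hp1⟩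
  -- Every word lies below some power of `ρ.reverse`, or above all of them; pairwise
  -- incomparability forces one of the two sides to be available to all `k` states.
  have hside : (∀ i, ∃ α, (∃ p ∈ T (t + d + 1) i, D0.deltaStar D0.start α = some p) ∧
        ∃ N, α.reverse < pw ρ N) ∨
      (∀ i, ∃ α, (∃ p ∈ T (t + d + 1) i, D0.deltaStar D0.start α = some p) ∧
        ∀ N, pw ρ N ≤ α.reverse) := by
    by_contra! h
    obtain ⟨⟨i, hi⟩, ⟨j, hj⟩⟩ := h
    have hji : below (suffixDFA D0 m) (v j) (v i) := by
      intro β hβ α hα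
      obtain ⟨β', rfl, hβ'⟩ := hIq j β hβ
      obtain ⟨α', rfl, hα'⟩ := hIq i α hα
      obtain ⟨N, hN⟩ := hj β' hβ'
      rw [colexLt_iff, List.reverse_append, List.reverse_append, append_lt_append_left_iff]
      exact lt_of_lt_of_le hN (hi α' hα' N)
    by_cases hij : i = j
    · subst hij
      exact below_irrefl hreach _ hji
    · exact hanti j i (Ne.symm hij) hji
  obtain ⟨e, he, hidem⟩ := exists_idempotent_pw D0 ρ.reverse
  -- An idempotent power of `ρ.reverse` sends each chosen word to a fixed state.
  have build : ∀ (α : Fin k → List A),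
      (∀ i, ∃ p ∈ T (t + d + 1) i, D0.deltaStar D0.start (α i) = some p) →
      ∃ u : Fin k → Q0, Function.Injective u ∧
        (∀ j, D0.deltaStar D0.start (α j ++ pw ρ.reverse e) = some (u j)) ∧
        ∀ j n, D0.deltaStar (u j) (pw ρ.reverse (e * n)) = some (u j) := by
    intro α hα
    choose p hp hαp using hα
    choose u hu hpu using fun i => hpow e i (p i) (hp i)
    refine ⟨u, ?_, fun j => ?_, fun j n => ?_⟩
    · intro i j hij
      have h1 := (hT _ _ _).1 (hu i)
      rw [hij, (hT _ _ _).1 (hu j)] at h1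
      exact hinj (Subtype.ext (Prod.ext (Option.some.inj h1).symm ((hx i).trans (hx j).symm)))
    · rw [deltaStar_append_of D0 (hαp j), hpu j]
    · have hfix : D0.deltaStar (u j) (pw ρ.reverse e) = some (u j) := by
        rw [← deltaStar_append_of D0 (hpu j), ← pw_add, hidem, hpu j]
      induction n with
      | zero => rfl
      | succ n ih => rw [Nat.mul_succ, pw_add, deltaStar_append_of D0 ih, hfix]
  have hrev : ∀ α : List A, (α ++ pw ρ.reverse e).reverse = pw ρ e ++ α.reverse := by
    intro α
    rw [List.reverse_append, pw_reverse, List.reverse_reverse]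
  have hrev' : ∀ n, (pw ρ.reverse n).reverse = pw ρ n := by
    intro n
    rw [pw_reverse, List.reverse_reverse]
  -- A power longer than all the chosen words is a suffix of none of them.
  have hlong : ∀ (α : Fin k → List A) (n : ℕ), (∑ i, (α i).length) < n →
      ∀ j, ¬ pw ρ.reverse (e * n + e) <:+ α j ++ pw ρ.reverse e := by
    intro α n hn j hsuf
    have h1 := hsuf.length_le
    have h2 : (α j).length ≤ ∑ i, (α i).length :=
      Finset.single_le_sum (f := fun i => (α i).length) (fun _ _ => Nat.zero_le _)
        (Finset.mem_univ j)
    rw [List.length_append, length_pw, length_pw, List.length_reverse, hρlen, add_mul] at h1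
    have h3 : n ≤ e * n * (d + 1) := by
      calc n = 1 * n * 1 := by ring
        _ ≤ e * n * (d + 1) := by gcongr <;> omega
    omega
  rcases hside with h | h
  · choose α hα N hN using h
    obtain ⟨u, hu, hr, hc⟩ := build α hα
    set n := (∑ i, (α i).length) + (∑ i, N i) + 1 with hn
    refine ⟨fun i => α i ++ pw ρ.reverse e, pw ρ.reverse (e * n + e), u, hu, hr,
      fun j => hc j (n + 1), Or.inl fun j => ?_, hlong α n (by omega)⟩
    rw [colexLt_iff, hrev, hrev', add_comm, pw_add, append_lt_append_left_iff]
    have h2 : N j ≤ ∑ i, N i :=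
      Finset.single_le_sum (fun _ _ => Nat.zero_le _) (Finset.mem_univ j)
    have h3 : n ≤ e * n := Nat.le_mul_of_pos_left n he
    exact lt_of_lt_of_le (hN j) (pw_mono ρ (by omega))
  · choose α hα hN using h
    obtain ⟨u, hu, hr, hc⟩ := build α hα
    set n := (∑ i, (α i).length) + 1 with hn
    have hnot := hlong α n (by omega)
    refine ⟨fun i => α i ++ pw ρ.reverse e, pw ρ.reverse (e * n + e), u, hu, hr,
      fun j => hc j (n + 1), Or.inr fun j => ?_, hnot⟩
    rw [colexLt_iff]
    refine lt_of_le_of_ne ?_ fun heq => hnot j ?_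
    · rw [hrev, hrev', add_comm, pw_add, ← not_lt, append_lt_append_left_iff, not_lt]
      exact hN j _
    · rw [List.reverse_injective heq]

end Configuration

end ColexWidth

/-- `width^D(L) ≥ k` iff the minimal DFA of `L` contains `k`
pairwise distinct states `u_1, …, u_k` reached by words `μ_1, …, μ_k`, each
carrying a cycle labeled by a common word `γ`, with all `μ_j ≺ γ` or `γ ≺` all
`μ_j`, and `γ` not a suffix of any `μ_j`. -/
theorem stmt_11 {A Q0 : Type} [LinearOrder A] [Fintype A] [Fintype Q0]
    (L : Set (List A)) (hLne : L.Nonempty)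
    (D0 : DFA' A Q0) (h0reach : D0.Reachable) (h0use : D0.Useful) (hL0 : D0.lang = L)
    (hmin : ∀ α ∈ Pref L, ∀ β ∈ Pref L, NerodeEq L α β →
        D0.deltaStar D0.start α = D0.deltaStar D0.start β)
    (k : ℕ) (hk : 2 ≤ k) :
    (∀ (Q : Type) (_ : Fintype Q) (D : DFA' A Q) (le : Q → Q → Prop)
        (p : ℕ) (f : Fin p → Set Q),
        D.Reachable → D.Useful → D.lang = L → IsColexDFA D le →
        IsChainPartition le p f → k ≤ p) ↔
      ∃ (μ : Fin k → List A) (γ : List A) (u : Fin k → Q0),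
        Function.Injective u ∧
        (∀ j, D0.deltaStar D0.start (μ j) = some (u j)) ∧
        (∀ j, D0.deltaStar (u j) γ = some (u j)) ∧
        ((∀ j, colexLt (μ j) γ) ∨ (∀ j, colexLt γ (μ j))) ∧
        (∀ j, ¬ γ <:+ μ j) := by
  subst hL0
  constructor
  · intro hwidth
    by_contra hno
    obtain ⟨w, rfl⟩ : ∃ w, k = w + 1 := ⟨k - 1, by omega⟩
    set m := Nat.card (Fin (w + 1) → Set Q0) with hm
    have hreach := ColexWidth.suffixDFA_reachable D0 m
    have := ColexWidth.finite_suffixState D0 m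
    have := Fintype.ofFinite (ColexWidth.SuffixState D0 m)
    obtain ⟨c, hc⟩ := ColexWidth.interval_order_coloring
      (ColexWidth.below (ColexWidth.suffixDFA D0 m)) (ColexWidth.below_irrefl hreach)
      (fun _ _ _ _ => ColexWidth.below_interval) w (by omega)
      (by
        intro v hv
        by_contra! h
        exact hno (ColexWidth.configuration_of_antichain hk hm v hv h))
      Finset.univ
    have hle := hwidth (ColexWidth.SuffixState D0 m) inferInstance (ColexWidth.suffixDFA D0 m)
      (ColexWidth.suffixDFA D0 m).leD w (fun i => {q | c q = i}) hreach
      (ColexWidth.suffixDFA_useful h0use m) (ColexWidth.suffixDFA_lang D0 m)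
      (ColexWidth.isColexDFA_leD hreach)
      ⟨fun q => ⟨c q, rfl, fun _ h => h.symm⟩, fun i a ha b hb => by
        rcases hc a (Finset.mem_univ _) b (Finset.mem_univ _) (Eq.trans ha (Eq.symm hb)) with
          h | h | h
        · exact Or.inl (Or.inl h)
        · exact Or.inl (Or.inr h)
        · exact Or.inr (Or.inr h)⟩
    omega
  · rintro ⟨μ, γ, u, hinj, hμ, hγ, hside, hsuf⟩ Q _ D le p f - - hlang hle hf
    exact ColexWidth.le_of_configuration h0use hmin hlang hle hf hinj hμ hγ hside hsuf
end
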